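/- There exists an absolute constant c > 0 such that for every n ∈ ℕ, every d ≥ 1, every f : {0,1}^n → {0,1}, and every 2-coloring col of the edges of the hypercube into red and blue, Talagrand_col(f) ≥ c·√d·W_{≥d}[f]. -/

import Mathlib

open Finset

noncomputable section

/-- Expectation over the uniform distribution on `{0,1}^n`. -/
def hcExp (n : ℕ) (g : (Fin n → Bool) → ℝ) : ℝ :=
  (∑ x : Fin n → Bool, g x) / 2 ^ n

/-- Flip the `i`-th coordinate of `x`. -/
def hcFlip {n : ℕ} (x : Fin n → Bool) (i : Fin n) : Fin n → Bool :=
  Function.update x i (!(x i))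

/-- Sensitivity of `f` at `x`. -/
def sens {n : ℕ} (f : (Fin n → Bool) → Bool) (x : Fin n → Bool) : ℕ :=
  (Finset.univ.filter fun i => f (hcFlip x i) ≠ f x).card

/-- `f` with values in `{0,1} ⊆ ℝ`. -/
def toReal {n : ℕ} (f : (Fin n → Bool) → Bool) : (Fin n → Bool) → ℝ :=
  fun x => if f x then 1 else 0

/-- Variance of a Boolean function. -/
def hcVar (n : ℕ) (f : (Fin n → Bool) → Bool) : ℝ :=
  hcExp n (toReal f) - (hcExp n (toReal f)) ^ 2

/-- Influence of coordinate `i`. -/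
def influence (n : ℕ) (f : (Fin n → Bool) → Bool) (i : Fin n) : ℝ :=
  hcExp n (fun x => if f (hcFlip x i) = f x then 0 else 1)

/-- Fourier character. -/
def chi {n : ℕ} (S : Finset (Fin n)) (x : Fin n → Bool) : ℝ :=
  ∏ i ∈ S, (if x i then (-1 : ℝ) else 1)

/-- Fourier coefficient of `g` at `S`. -/
def fcoef (n : ℕ) (g : (Fin n → Bool) → ℝ) (S : Finset (Fin n)) : ℝ :=
  hcExp n (fun x => g x * chi S x)

/-- Derivative of `g` along coordinate `i`. -/
def derivOn {n : ℕ} (g : (Fin n → Bool) → ℝ) (i : Fin n) (x : Fin n → Bool) : ℝ :=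
  g (Function.update x i false) - g (Function.update x i true)

/-- Euclidean norm of the gradient of `g` at `x`. -/
def gradNorm2 {n : ℕ} (g : (Fin n → Bool) → ℝ) (x : Fin n → Bool) : ℝ :=
  Real.sqrt (∑ i, (derivOn g i x) ^ 2)

/-- `ℓ_p` norm of the gradient of `g` at `x`. -/
def gradNormP {n : ℕ} (p : ℝ) (g : (Fin n → Bool) → ℝ) (x : Fin n → Bool) : ℝ :=
  (∑ i, |derivOn g i x| ^ p) ^ (1 / p)

/-- Fourier weight at exactly level `d`. -/
def wEq (n : ℕ) (g : (Fin n → Bool) → ℝ) (d : ℕ) : ℝ :=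
  ∑ S ∈ Finset.univ.filter (fun S : Finset (Fin n) => S.card = d), (fcoef n g S) ^ 2

/-- Approximate level-`d` Fourier weight: levels in `[d, 2d)`. -/
def wApprox (n : ℕ) (g : (Fin n → Bool) → ℝ) (d : ℕ) : ℝ :=
  ∑ S ∈ Finset.univ.filter (fun S : Finset (Fin n) => d ≤ S.card ∧ S.card < 2 * d),
    (fcoef n g S) ^ 2

/-- Fourier weight at levels `≥ d`. -/
def wGe (n : ℕ) (g : (Fin n → Bool) → ℝ) (d : ℕ) : ℝ :=
  ∑ S ∈ Finset.univ.filter (fun S : Finset (Fin n) => d ≤ S.card), (fcoef n g S) ^ 2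


/-- Number of red sensitive edges at `x` counted when `f x = 1` (red sensitivity).
Here a coloring `col : (Fin n → Bool) → Fin n → Bool` gives the color (`true` = red,
`false` = blue) of the edge `(x, x ⊕ eᵢ)`. -/
def sRed {n : ℕ} (f : (Fin n → Bool) → Bool) (col : (Fin n → Bool) → Fin n → Bool)
    (x : Fin n → Bool) : ℕ :=
  if f x then
    (Finset.univ.filter fun i => f (hcFlip x i) ≠ f x ∧ col x i = true).card
  else 0

/-- Blue sensitivity: counted when `f x = 0`. -/
def sBlue {n : ℕ} (f : (Fin n → Bool) → Bool) (col : (Fin n → Bool) → Fin n → Bool)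
    (x : Fin n → Bool) : ℕ :=
  if f x then 0
  else (Finset.univ.filter fun i => f (hcFlip x i) ≠ f x ∧ col x i = false).card

/-- The Talagrand boundary with respect to the coloring `col`. -/
def talagrandCol {n : ℕ} (f : (Fin n → Bool) → Bool)
    (col : (Fin n → Bool) → Fin n → Bool) : ℝ :=
  hcExp n (fun x => Real.sqrt (sRed f col x)) + hcExp n (fun x => Real.sqrt (sBlue f col x))

/-- The coloring is symmetric: the two endpoints of an edge see the same color. -/
def colSymm {n : ℕ} (col : (Fin n → Bool) → Fin n → Bool) : Prop :=
  ∀ (x : Fin n → Bool) (i : Fin n), col (hcFlip x i) i = col x i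

/-!
Charge each sensitive edge to its endpoint with value `1` if it is red and with value `0` if it is
blue: the Talagrand boundary is then `𝔼 x, √(number of edges charged to x)`. Since every sensitive
edge is charged exactly once, the vector of level-one Fourier coefficients of `f` is the mean of its
gradient along charged edges, and Minkowski's inequality gives
`W₁[f] ≤ √W₁[f] ≤ Talagrand_col(f)`.

For the levels in `[d, 2d)`, split the coordinates at random into `4d` classes and apply the
level-one inequality on the subcubes whose free coordinates form one class. Summed over the
classes, the left-hand side is `∑ f̂(S)² · #{classes meeting S exactly once}`, while by
Cauchy–Schwarz the boundary grows at most by the factor `√(4d)`. A set with `d ≤ |S| < 2d` is met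
exactly once by at least `d / 2` classes on average, by a second moment bound. The dyadic ranges
`[2ᵏd, 2ᵏ⁺¹d)` then add up to a geometric series.
-/

open scoped BigOperators

section UniformExpectation

lemma expect_eq_expect_of_add_perm {X : Type*} [Fintype X] (σ : Equiv.Perm X) {u v : X → ℝ}
    (h : ∀ x, u x + u (σ x) = v x + v (σ x)) : 𝔼 x, u x = 𝔼 x, v x := by
  have expect_add_perm (w : X → ℝ) : 𝔼 x, (w x + w (σ x)) = 2 * 𝔼 x, w x := by
    rw [expect_add_distrib, Fintype.expect_equiv σ (fun x => w (σ x)) w fun _ => rfl, two_mul]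
  have hsum : 2 * 𝔼 x, u x = 2 * 𝔼 x, v x := by
    rw [← expect_add_perm, ← expect_add_perm]
    exact expect_congr rfl fun x _ => h x
  linarith

lemma sqrt_sum_expect_sq_le {X ι : Type*} [Fintype X] [Fintype ι] (u : ι → X → ℝ) :
    √(∑ i, (𝔼 x, u i x) ^ 2) ≤ 𝔼 x, √(∑ i, u i x ^ 2) := by
  have happly (i : ι) : (𝔼 x, (WithLp.toLp 2 (u · x) : EuclideanSpace ℝ ι)) i = 𝔼 x, u i x :=
    map_expect ((EuclideanSpace.proj i : EuclideanSpace ℝ ι →L[ℝ] ℝ).toLinearMap.restrictScalars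
      ℚ≥0) _ _
  have norm_nnqsmul (m : ℕ) (v : EuclideanSpace ℝ ι) :
      ‖(m : ℚ≥0)⁻¹ • v‖ = (m : ℚ≥0)⁻¹ • ‖v‖ := by
    rw [← NNRat.cast_smul_eq_nnqsmul ℝ, norm_smul, Real.norm_of_nonneg (NNRat.cast_nonneg _),
      NNRat.smul_def]
  simpa [EuclideanSpace.norm_eq, happly] using le_expect_of_subadditive (s := univ)
    (f := fun x => (WithLp.toLp 2 (u · x) : EuclideanSpace ℝ ι)) norm_zero norm_add_le norm_nnqsmul

lemma expect_expect_piecewise {ι κ : Type*} [Fintype ι] [DecidableEq ι] [Fintype κ] [Nonempty κ]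
    (J : Finset ι) (G : (ι → κ) → ℝ) : 𝔼 x, 𝔼 y, G (J.piecewise y x) = 𝔼 x, G x := by
  have hswap : Function.Involutive
      fun p : (ι → κ) × (ι → κ) => (J.piecewise p.2 p.1, J.piecewise p.1 p.2) := by
    rintro ⟨x, y⟩
    ext i <;> by_cases hi : i ∈ J <;> simp [hi]
  calc 𝔼 x, 𝔼 y, G (J.piecewise y x)
      = 𝔼 p : (ι → κ) × (ι → κ), G (J.piecewise p.2 p.1) := (expect_product' univ univ _).symm
    _ = 𝔼 p : (ι → κ) × (ι → κ), G p.1 :=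
        Fintype.expect_equiv hswap.toPerm _ _ fun _ => rfl
    _ = 𝔼 x, 𝔼 _y : ι → κ, G x := expect_product' univ univ fun x _ => G x
    _ = 𝔼 x, G x := by simp only [Fintype.expect_const]

end UniformExpectation

section RandomPartition

variable {α κ : Type*} [DecidableEq κ]

lemma sum_sqrt_card_fiber_le [Fintype κ] (g : α → κ) (A : Finset α) :
    ∑ j, √(#{i ∈ A | g i = j} : ℝ) ≤ √(Fintype.card κ) * √(#A : ℝ) := by
  rw [← Real.sqrt_mul (Nat.cast_nonneg _)]
  refine Real.le_sqrt_of_sq_le ?_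
  calc (∑ j, √(#{i ∈ A | g i = j} : ℝ)) ^ 2
      ≤ Fintype.card κ * ∑ j, √(#{i ∈ A | g i = j} : ℝ) ^ 2 := sq_sum_le_card_mul_sum_sq
    _ = Fintype.card κ * #A := by
        simp only [Real.sq_sqrt (Nat.cast_nonneg _), ← Nat.cast_sum,
          sum_card_fiberwise_eq_card_filter, mem_univ, filter_true]

/-- The classes of the partition into fibers of `g` that meet `S` in exactly one element. -/
def singletonClasses [Fintype κ] (g : α → κ) (S : Finset α) : Finset κ :=
  {j | #{i ∈ S | g i = j} = 1}

lemma sum_sq_card_fiber [Fintype κ] (g : α → κ) (S : Finset α) :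
    ∑ j, (#{i ∈ S | g i = j} : ℝ) ^ 2 = ∑ i ∈ S, ∑ k ∈ S, if g i = g k then 1 else 0 := by
  calc ∑ j, (#{i ∈ S | g i = j} : ℝ) ^ 2
      = ∑ j, ∑ i ∈ S with g i = j, (#{k ∈ S | g i = g k} : ℝ) := by
        refine sum_congr rfl fun j _ => ?_
        rw [sq, ← nsmul_eq_mul, ← sum_const]
        refine sum_congr rfl fun i hi => ?_
        simp only [(mem_filter.mp hi).2, eq_comm]
    _ = ∑ i ∈ S, ∑ k ∈ S, if g i = g k then 1 else 0 := by
        rw [sum_fiberwise]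
        simp only [sum_boole]

lemma two_mul_card_sub_sum_sq_le_card_singletonClasses [Fintype κ] (g : α → κ) (S : Finset α) :
    2 * #S - ∑ j, (#{i ∈ S | g i = j} : ℝ) ^ 2 ≤ #(singletonClasses g S) := by
  have two_mul_sub_sq_le (c : ℕ) : 2 * (c : ℝ) - (c : ℝ) ^ 2 ≤ if c = 1 then 1 else 0 := by
    split_ifs with hc
    · norm_num [hc]
    · obtain rfl | hc2 : c = 0 ∨ 2 ≤ c := by omega
      · norm_num
      · have : (2 : ℝ) ≤ c := mod_cast hc2
        nlinarith
  have hS : ∑ j, (#{i ∈ S | g i = j} : ℝ) = #S := by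
    simp only [← Nat.cast_sum, sum_card_fiberwise_eq_card_filter, mem_univ, filter_true]
  calc 2 * #S - ∑ j, (#{i ∈ S | g i = j} : ℝ) ^ 2
      = ∑ j, (2 * (#{i ∈ S | g i = j} : ℝ) - (#{i ∈ S | g i = j} : ℝ) ^ 2) := by
        rw [sum_sub_distrib, ← mul_sum, hS]
    _ ≤ ∑ j, if #{i ∈ S | g i = j} = 1 then 1 else 0 :=
        sum_le_sum fun j _ => two_mul_sub_sq_le _
    _ = #(singletonClasses g S) := by rw [sum_boole, singletonClasses]

variable [Fintype α] [DecidableEq α] [Fintype κ] [Nonempty κ]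

lemma expect_ite_apply_eq_apply {i k : α} (h : i ≠ k) :
    𝔼 g : α → κ, (if g i = g k then 1 else 0 : ℝ) = 1 / Fintype.card κ := by
  calc 𝔼 g : α → κ, (if g i = g k then 1 else 0 : ℝ)
      = 𝔼 p : κ × ({j // j ≠ k} → κ), (if p.2 ⟨i, h⟩ = p.1 then 1 else 0 : ℝ) :=
        Fintype.expect_equiv (Equiv.funSplitAt k κ) _ _ fun _ => rfl
    _ = 𝔼 c, 𝔼 q : {j // j ≠ k} → κ, (if q ⟨i, h⟩ = c then 1 else 0 : ℝ) :=
        expect_product' univ univ fun (c : κ) (q : {j // j ≠ k} → κ) =>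
          (if q ⟨i, h⟩ = c then 1 else 0 : ℝ)
    _ = 𝔼 q : {j // j ≠ k} → κ, 𝔼 c, (if q ⟨i, h⟩ = c then 1 else 0 : ℝ) := expect_comm ..
    _ = 1 / Fintype.card κ := by
        simp

lemma expect_sum_sq_card_fiber (S : Finset α) :
    𝔼 g : α → κ, ∑ j, (#{i ∈ S | g i = j} : ℝ) ^ 2 =
      #S * (1 + (#S - 1) / Fintype.card κ) := by
  have hrow {i : α} (hi : i ∈ S) :
      ∑ k ∈ S, 𝔼 g : α → κ, (if g i = g k then 1 else 0 : ℝ) =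
        1 + (#S - 1) / Fintype.card κ := by
    rw [← add_sum_erase _ _ hi, sum_congr rfl fun k hk =>
      expect_ite_apply_eq_apply (ne_of_mem_erase hk).symm, sum_const, card_erase_of_mem hi,
      nsmul_eq_mul, Nat.cast_pred (card_pos.mpr ⟨i, hi⟩)]
    simp [div_eq_mul_inv]
  simp only [sum_sq_card_fiber, expect_sum_comm]
  rw [sum_congr rfl fun i hi => hrow hi, sum_const, nsmul_eq_mul]

lemma card_mul_le_expect_card_singletonClasses (S : Finset α) :
    #S * (1 - (#S - 1) / Fintype.card κ) ≤ 𝔼 g : α → κ, (#(singletonClasses g S) : ℝ) := by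
  calc (#S * (1 - (#S - 1) / Fintype.card κ) : ℝ)
      = 2 * #S - #S * (1 + (#S - 1) / Fintype.card κ) := by ring
    _ = 𝔼 g : α → κ, (2 * #S - ∑ j, (#{i ∈ S | g i = j} : ℝ) ^ 2) := by
        rw [expect_sub_distrib, Fintype.expect_const, expect_sum_sq_card_fiber]
    _ ≤ 𝔼 g : α → κ, (#(singletonClasses g S) : ℝ) :=
        expect_le_expect fun g _ => two_mul_card_sub_sum_sq_le_card_singletonClasses g S

lemma half_le_expect_card_singletonClasses {d : ℕ} {S : Finset α} (hdS : d ≤ #S)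
    (hSd : #S < 2 * d) :
    (d / 2 : ℝ) ≤ 𝔼 g : α → Fin (4 * d), (#(singletonClasses g S) : ℝ) := by
  have : NeZero (4 * d) := ⟨by omega⟩
  have hdS' : (d : ℝ) ≤ #S := mod_cast hdS
  have hSd' : (#S : ℝ) + 1 ≤ 2 * d := mod_cast hSd
  have hpos : (0 : ℝ) < (4 * d : ℕ) := mod_cast (by omega : 0 < 4 * d)
  calc (d / 2 : ℝ) = d * (1 / 2) := by ring
    _ ≤ #S * (1 - (#S - 1) / Fintype.card (Fin (4 * d))) := by
        gcongr
        rw [le_sub_comm, Fintype.card_fin, div_le_iff₀ hpos]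
        push_cast
        linarith
    _ ≤ 𝔼 g : α → Fin (4 * d), (#(singletonClasses g S) : ℝ) :=
        card_mul_le_expect_card_singletonClasses S

end RandomPartition

section Fourier

variable {n : ℕ}

lemma hcExp_eq_expect (g : (Fin n → Bool) → ℝ) : hcExp n g = 𝔼 x, g x := by
  simp [hcExp, Fintype.expect_eq_sum_div_card]

lemma sum_chi_mul_chi (x y : Fin n → Bool) :
    ∑ S, chi S x * chi S y = if x = y then 2 ^ n else 0 := by
  have hprod : ∑ S, chi S x * chi S y =
      ∏ i, (1 + (if x i then (-1 : ℝ) else 1) * (if y i then (-1 : ℝ) else 1)) := by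
    simp only [chi, ← prod_mul_distrib, prod_one_add, powerset_univ]
  rw [hprod]
  split_ifs with hxy
  · subst hxy
    refine (prod_eq_pow_card (b := 2) fun i _ => ?_).trans (by simp)
    split_ifs <;> norm_num
  · obtain ⟨i, hi⟩ := Function.ne_iff.mp hxy
    refine prod_eq_zero (mem_univ i) ?_
    cases hx : x i <;> cases hy : y i <;> simp_all

lemma sum_sq_fcoef (g : (Fin n → Bool) → ℝ) : ∑ S, fcoef n g S ^ 2 = 𝔼 x, g x ^ 2 := by
  calc ∑ S, fcoef n g S ^ 2
      = ∑ S, 𝔼 x, 𝔼 y, (chi S x * chi S y) * (g x * g y) := by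
        refine sum_congr rfl fun S _ => ?_
        rw [fcoef, hcExp_eq_expect, sq, Fintype.expect_mul_expect]
        refine expect_congr rfl fun x _ => expect_congr rfl fun y _ => ?_
        ring
    _ = 𝔼 x, 𝔼 y, (∑ S, chi S x * chi S y) * (g x * g y) := by
        simp only [← expect_sum_comm, sum_mul]
    _ = 𝔼 x, g x ^ 2 := by
        refine expect_congr rfl fun x _ => ?_
        simpa [sum_chi_mul_chi, sq] using expect_boole_mul (fun y => g x * g y) x

lemma wEq_one (g : (Fin n → Bool) → ℝ) : wEq n g 1 = ∑ i, fcoef n g {i} ^ 2 := by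
  rw [wEq, univ_filter_card_eq, powersetCard_one, sum_map]
  rfl

lemma wEq_le_expect_sq (g : (Fin n → Bool) → ℝ) (d : ℕ) : wEq n g d ≤ 𝔼 x, g x ^ 2 :=
  (sum_le_sum_of_subset_of_nonneg (filter_subset _ _) fun _ _ _ => sq_nonneg _).trans_eq
    (sum_sq_fcoef g)

lemma wGe_eq_wApprox_add_wGe (g : (Fin n → Bool) → ℝ) (d : ℕ) :
    wGe n g d = wApprox n g d + wGe n g (2 * d) := by
  unfold wGe wApprox
  rw [← sum_filter_add_sum_filter_not _ (fun S : Finset (Fin n) => #S < 2 * d),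
    filter_filter, filter_filter]
  congr 2
  ext S
  simp only [mem_filter, mem_univ, true_and]
  omega

lemma wGe_eq_zero_of_lt (g : (Fin n → Bool) → ℝ) {d : ℕ} (h : n < d) : wGe n g d = 0 := by
  refine sum_eq_zero fun S hS => absurd (card_finset_fin_le S) ?_
  have := (mem_filter.mp hS).2
  omega

lemma sqrt_mul_wGe_le_of_wApprox (g : (Fin n → Bool) → ℝ) {C : ℝ}
    (h : ∀ d : ℕ, 1 ≤ d → √d * wApprox n g d ≤ C) {d : ℕ} (hd : 1 ≤ d) :
    √d * wGe n g d ≤ 4 * C := by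
  have hlevel := h d hd
  have happrox : 0 ≤ √d * wApprox n g d :=
    mul_nonneg (Real.sqrt_nonneg _) (sum_nonneg fun _ _ => sq_nonneg _)
  by_cases hdn : n < d
  · rw [wGe_eq_zero_of_lt g hdn]
    linarith
  have htail : (4 / 3 : ℝ) * (√d * wGe n g (2 * d)) ≤ 4 * C := by
    have hnonneg : 0 ≤ √d * wGe n g (2 * d) :=
      mul_nonneg (Real.sqrt_nonneg _) (sum_nonneg fun _ _ => sq_nonneg _)
    calc (4 / 3 : ℝ) * (√d * wGe n g (2 * d))
        ≤ √2 * (√d * wGe n g (2 * d)) := by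
          gcongr
          exact Real.le_sqrt_of_sq_le (by norm_num)
      _ = √(2 * d : ℕ) * wGe n g (2 * d) := by
          rw [← mul_assoc, Nat.cast_mul, Nat.cast_two, Real.sqrt_mul zero_le_two]
      _ ≤ 4 * C := sqrt_mul_wGe_le_of_wApprox g h (by omega)
  rw [wGe_eq_wApprox_add_wGe, mul_add]
  linarith
termination_by n + 1 - d
decreasing_by omega

end Fourier

section Restriction

variable {n : ℕ} {α : Type*}

/-- The restriction of `F` to the subcube through `x` with free coordinates `J`. It is kept as a
function on the whole cube that ignores the coordinates outside `J`, so that the dimension does not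
depend on `J`. -/
def restrictTo (J : Finset (Fin n)) (F : (Fin n → Bool) → α) (x : Fin n → Bool) :
    (Fin n → Bool) → α :=
  fun y => F (J.piecewise y x)

lemma chi_piecewise (J S : Finset (Fin n)) (x y : Fin n → Bool) :
    chi S (J.piecewise y x) = chi (S ∩ J) y * chi (S \ J) x := by
  rw [chi, chi, chi, ← prod_piecewise]
  refine prod_congr rfl fun i _ => ?_
  by_cases hi : i ∈ J <;> simp [hi]

lemma fcoef_fcoef_restrictTo (J S : Finset (Fin n)) (g : (Fin n → Bool) → ℝ) :
    fcoef n (fun x => fcoef n (restrictTo J g x) (S ∩ J)) (S \ J) = fcoef n g S := by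
  simp only [fcoef, hcExp_eq_expect]
  rw [← expect_expect_piecewise J fun z => g z * chi S z]
  simp only [expect_mul, chi_piecewise, restrictTo, mul_assoc]

lemma sum_sq_fcoef_le_expect_wEq_restrictTo (J : Finset (Fin n)) (g : (Fin n → Bool) → ℝ)
    (d : ℕ) : ∑ S with #(S ∩ J) = d, fcoef n g S ^ 2 ≤ 𝔼 x, wEq n (restrictTo J g x) d := by
  have hinj : Function.Injective fun S => (S ∩ J, S \ J) := fun S T h => by
    obtain ⟨hinter, hsdiff⟩ := Prod.mk.inj h
    rw [← sdiff_union_inter S J, hsdiff, hinter, sdiff_union_inter]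
  calc ∑ S with #(S ∩ J) = d, fcoef n g S ^ 2
      = ∑ S with #(S ∩ J) = d,
          fcoef n (fun x => fcoef n (restrictTo J g x) (S ∩ J)) (S \ J) ^ 2 := by
        simp only [fcoef_fcoef_restrictTo]
    _ = ∑ p ∈ ({S | #(S ∩ J) = d} : Finset (Finset (Fin n))).image fun S => (S ∩ J, S \ J),
          fcoef n (fun x => fcoef n (restrictTo J g x) p.1) p.2 ^ 2 :=
        by rw [sum_image hinj.injOn]
    _ ≤ ∑ p ∈ ({T | #T = d} : Finset (Finset (Fin n))) ×ˢ univ,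
          fcoef n (fun x => fcoef n (restrictTo J g x) p.1) p.2 ^ 2 := by
        refine sum_le_sum_of_subset_of_nonneg (image_subset_iff.mpr fun S hS => ?_)
          fun _ _ _ => sq_nonneg _
        simpa using hS
    _ = ∑ T with #T = d, ∑ U, fcoef n (fun x => fcoef n (restrictTo J g x) T) U ^ 2 :=
        sum_product ..
    _ = 𝔼 x, wEq n (restrictTo J g x) d := by
        simp only [sum_sq_fcoef, wEq, expect_sum_comm]

lemma toReal_restrictTo (J : Finset (Fin n)) (f : (Fin n → Bool) → Bool) (x : Fin n → Bool) :
    toReal (restrictTo J f x) = restrictTo J (toReal f) x :=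
  rfl

lemma piecewise_hcFlip_of_mem {J : Finset (Fin n)} {i : Fin n} (hi : i ∈ J) (x y : Fin n → Bool) :
    J.piecewise (hcFlip y i) x = hcFlip (J.piecewise y x) i := by
  rw [hcFlip, hcFlip, update_piecewise_of_mem _ _ _ hi, piecewise_eq_of_mem _ _ _ hi]

lemma piecewise_hcFlip_of_notMem {J : Finset (Fin n)} {i : Fin n} (hi : i ∉ J)
    (x y : Fin n → Bool) : J.piecewise (hcFlip y i) x = J.piecewise y x :=
  J.piecewise_congr (fun _ hk => Function.update_of_ne (ne_of_mem_of_not_mem hk hi) _ _)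
    fun _ _ => rfl

lemma colSymm_restrictTo (J : Finset (Fin n)) {col : (Fin n → Bool) → Fin n → Bool}
    (hc : colSymm col) (x : Fin n → Bool) : colSymm (restrictTo J col x) := by
  intro y i
  by_cases hi : i ∈ J
  · simpa only [restrictTo, piecewise_hcFlip_of_mem hi] using hc (J.piecewise y x) i
  · simp only [restrictTo, piecewise_hcFlip_of_notMem hi]

end Restriction

section ChargedEdges

variable {n : ℕ} (f : (Fin n → Bool) → Bool) (col : (Fin n → Bool) → Fin n → Bool)

/-- The directions of the sensitive edges that count at `x` in the Talagrand boundary. As red is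
`true`, these are the edges whose color is `f x`; each sensitive edge is thus charged to exactly one
of its endpoints. -/
def chargedEdges (x : Fin n → Bool) : Finset (Fin n) :=
  {i | f (hcFlip x i) ≠ f x ∧ col x i = f x}

variable {f col} in
lemma mem_chargedEdges {x : Fin n → Bool} {i : Fin n} :
    i ∈ chargedEdges f col x ↔ f (hcFlip x i) ≠ f x ∧ col x i = f x :=
  mem_filter_univ i

lemma talagrandCol_eq_expect : talagrandCol f col = 𝔼 x, √(#(chargedEdges f col x) : ℝ) := by
  rw [talagrandCol, hcExp_eq_expect, hcExp_eq_expect, ← expect_add_distrib]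
  refine expect_congr rfl fun x _ => ?_
  cases hf : f x <;> simp [sRed, sBlue, chargedEdges, hf]

lemma chargedEdges_restrictTo (J : Finset (Fin n)) (x y : Fin n → Bool) :
    chargedEdges (restrictTo J f x) (restrictTo J col x) y =
      chargedEdges f col (J.piecewise y x) ∩ J := by
  ext i
  by_cases hi : i ∈ J
  · simp [mem_chargedEdges, restrictTo, piecewise_hcFlip_of_mem hi, hi]
  · simp [mem_chargedEdges, restrictTo, piecewise_hcFlip_of_notMem hi, hi]

lemma expect_talagrandCol_restrictTo (J : Finset (Fin n)) :
    𝔼 x, talagrandCol (restrictTo J f x) (restrictTo J col x) =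
      𝔼 x, √(#(chargedEdges f col x ∩ J) : ℝ) := by
  simp only [talagrandCol_eq_expect, chargedEdges_restrictTo]
  exact expect_expect_piecewise J fun z => √(#(chargedEdges f col z ∩ J) : ℝ)

end ChargedEdges

section LevelOne

variable {n : ℕ}

lemma hcFlip_involutive (i : Fin n) : Function.Involutive fun x => hcFlip x i := fun x => by
  simp [hcFlip]

lemma derivOn_eq_sub_mul_chi (g : (Fin n → Bool) → ℝ) (i : Fin n) (x : Fin n → Bool) :
    derivOn g i x = (g x - g (hcFlip x i)) * chi {i} x := by
  have hself : Function.update x i (x i) = x := Function.update_eq_self i x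
  cases hx : x i <;> rw [hx] at hself <;> simp [derivOn, hcFlip, chi, hx, hself]

/-- The discrete gradient of `f` at `x`, kept only along the edges charged to `x`. -/
def chargedGradient (f : (Fin n → Bool) → Bool) (col : (Fin n → Bool) → Fin n → Bool)
    (i : Fin n) (x : Fin n → Bool) : ℝ :=
  if i ∈ chargedEdges f col x then derivOn (toReal f) i x else 0

lemma sum_sq_chargedGradient (f : (Fin n → Bool) → Bool) (col : (Fin n → Bool) → Fin n → Bool)
    (x : Fin n → Bool) : ∑ i, chargedGradient f col i x ^ 2 = #(chargedEdges f col x) := by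
  have hsq (i : Fin n) :
      chargedGradient f col i x ^ 2 = if i ∈ chargedEdges f col x then 1 else 0 := by
    unfold chargedGradient
    split_ifs with hi
    · have hne : f (hcFlip x i) ≠ f x := (mem_chargedEdges.mp hi).1
      rw [derivOn_eq_sub_mul_chi]
      cases hf : f x <;> cases x i <;> simp_all [toReal, chi]
    · exact zero_pow two_ne_zero
  simp only [hsq, sum_boole, filter_univ_mem]

lemma fcoef_singleton_eq_expect_chargedGradient (f : (Fin n → Bool) → Bool)
    {col : (Fin n → Bool) → Fin n → Bool} (hc : colSymm col) (i : Fin n) :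
    fcoef n (toReal f) {i} = 𝔼 x, chargedGradient f col i x := by
  rw [fcoef, hcExp_eq_expect]
  refine expect_eq_expect_of_add_perm (hcFlip_involutive i).toPerm fun x => ?_
  have hflip : hcFlip (hcFlip x i) i = x := hcFlip_involutive i x
  have hcoord : hcFlip x i i = !x i := Function.update_self ..
  simp only [Function.Involutive.coe_toPerm, chargedGradient, mem_chargedEdges,
    derivOn_eq_sub_mul_chi, chi, prod_singleton, toReal, hflip, hcoord, hc x i]
  by_cases hx : f x <;> by_cases hy : f (hcFlip x i) <;> by_cases hcol : col x i <;>
    cases x i <;> simp [hx, hy, hcol]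

lemma wEq_one_le_talagrandCol (f : (Fin n → Bool) → Bool)
    {col : (Fin n → Bool) → Fin n → Bool} (hc : colSymm col) :
    wEq n (toReal f) 1 ≤ talagrandCol f col := by
  have hle_one : wEq n (toReal f) 1 ≤ 1 := by
    refine (wEq_le_expect_sq _ _).trans (expect_le univ_nonempty fun x _ => ?_)
    unfold toReal
    split_ifs <;> norm_num
  have hnonneg : 0 ≤ wEq n (toReal f) 1 := sum_nonneg fun _ _ => sq_nonneg _
  calc wEq n (toReal f) 1
      ≤ √(wEq n (toReal f) 1) := Real.le_sqrt_of_sq_le (by nlinarith)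
    _ = √(∑ i, (𝔼 x, chargedGradient f col i x) ^ 2) := by
        simp only [wEq_one, fcoef_singleton_eq_expect_chargedGradient f hc]
    _ ≤ 𝔼 x, √(∑ i, chargedGradient f col i x ^ 2) := sqrt_sum_expect_sq_le _
    _ = talagrandCol f col := by
        simp only [sum_sq_chargedGradient, talagrandCol_eq_expect]

end LevelOne

section Boundary

variable {n : ℕ} (f : (Fin n → Bool) → Bool) {col : (Fin n → Bool) → Fin n → Bool}

lemma sum_sq_fcoef_le_expect_sqrt_card_chargedEdges (hc : colSymm col) (J : Finset (Fin n)) :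
    ∑ S with #(S ∩ J) = 1, fcoef n (toReal f) S ^ 2 ≤
      𝔼 x, √(#(chargedEdges f col x ∩ J) : ℝ) := by
  calc ∑ S with #(S ∩ J) = 1, fcoef n (toReal f) S ^ 2
      ≤ 𝔼 x, wEq n (restrictTo J (toReal f) x) 1 := sum_sq_fcoef_le_expect_wEq_restrictTo J _ 1
    _ ≤ 𝔼 x, talagrandCol (restrictTo J f x) (restrictTo J col x) :=
        expect_le_expect fun x _ => by
          rw [← toReal_restrictTo]
          exact wEq_one_le_talagrandCol _ (colSymm_restrictTo J hc x)
    _ = 𝔼 x, √(#(chargedEdges f col x ∩ J) : ℝ) := expect_talagrandCol_restrictTo f col J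

lemma sum_sq_fcoef_mul_card_singletonClasses_le {κ : Type*} [Fintype κ] [DecidableEq κ]
    (hc : colSymm col) (g : Fin n → κ) :
    ∑ S, fcoef n (toReal f) S ^ 2 * #(singletonClasses g S) ≤
      √(Fintype.card κ) * talagrandCol f col := by
  calc ∑ S, fcoef n (toReal f) S ^ 2 * #(singletonClasses g S)
      = ∑ j, ∑ S with #(S ∩ ({i | g i = j} : Finset (Fin n))) = 1, fcoef n (toReal f) S ^ 2 := by
        simp only [inter_filter, inter_univ, sum_filter, singletonClasses, ← sum_boole, mul_sum,
          mul_ite, mul_one, mul_zero]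
        exact sum_comm
    _ ≤ ∑ j, 𝔼 x, √(#(chargedEdges f col x ∩ ({i | g i = j} : Finset (Fin n))) : ℝ) :=
        sum_le_sum fun j _ => sum_sq_fcoef_le_expect_sqrt_card_chargedEdges f hc _
    _ = 𝔼 x, ∑ j, √(#{i ∈ chargedEdges f col x | g i = j} : ℝ) := by
        simp only [expect_sum_comm, inter_filter, inter_univ]
    _ ≤ 𝔼 x, √(Fintype.card κ) * √(#(chargedEdges f col x) : ℝ) :=
        expect_le_expect fun x _ => sum_sqrt_card_fiber_le g _
    _ = √(Fintype.card κ) * talagrandCol f col := by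
        rw [← mul_expect, talagrandCol_eq_expect]

lemma sum_sq_fcoef_mul_expect_card_singletonClasses_le (κ : Type*) [Fintype κ] [DecidableEq κ]
    [Nonempty κ] (hc : colSymm col) :
    ∑ S, fcoef n (toReal f) S ^ 2 * 𝔼 g : Fin n → κ, (#(singletonClasses g S) : ℝ) ≤
      √(Fintype.card κ) * talagrandCol f col := by
  simp only [mul_expect, ← expect_sum_comm]
  exact expect_le univ_nonempty fun g _ => sum_sq_fcoef_mul_card_singletonClasses_le f hc g

lemma sqrt_mul_wApprox_le_talagrandCol (hc : colSymm col) {d : ℕ} (hd : 1 ≤ d) :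
    √d * wApprox n (toReal f) d ≤ 4 * talagrandCol f col := by
  have : NeZero (4 * d) := ⟨by omega⟩
  have hbound : (d / 2 : ℝ) * wApprox n (toReal f) d ≤ 2 * √d * talagrandCol f col := by
    calc (d / 2 : ℝ) * wApprox n (toReal f) d
        ≤ ∑ S with d ≤ #S ∧ #S < 2 * d, fcoef n (toReal f) S ^ 2 *
            𝔼 g : Fin n → Fin (4 * d), (#(singletonClasses g S) : ℝ) := by
          rw [wApprox, mul_comm, sum_mul]
          gcongr with S hS
          obtain ⟨hdS, hSd⟩ := (mem_filter.mp hS).2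
          exact half_le_expect_card_singletonClasses hdS hSd
      _ ≤ ∑ S, fcoef n (toReal f) S ^ 2 *
            𝔼 g : Fin n → Fin (4 * d), (#(singletonClasses g S) : ℝ) :=
          sum_le_sum_of_subset_of_nonneg (filter_subset _ _) fun S _ _ =>
            mul_nonneg (sq_nonneg _) (expect_nonneg fun _ _ => Nat.cast_nonneg _)
      _ ≤ √(Fintype.card (Fin (4 * d))) * talagrandCol f col :=
          sum_sq_fcoef_mul_expect_card_singletonClasses_le f _ hc
      _ = 2 * √d * talagrandCol f col := by
          rw [Fintype.card_fin, Nat.cast_mul, Nat.cast_ofNat, Real.sqrt_mul zero_le_four,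
            show √(4 : ℝ) = 2 by rw [Real.sqrt_eq_iff_mul_self_eq] <;> norm_num]
  have hsqrt : 0 < √(d : ℝ) := Real.sqrt_pos.mpr (mod_cast hd)
  refine le_of_mul_le_mul_left ?_ hsqrt
  calc √d * (√d * wApprox n (toReal f) d)
      = 2 * ((d / 2 : ℝ) * wApprox n (toReal f) d) := by
        rw [← mul_assoc, Real.mul_self_sqrt (Nat.cast_nonneg d)]
        ring
    _ ≤ 2 * (2 * √d * talagrandCol f col) := by gcongr
    _ = √d * (4 * talagrandCol f col) := by ring

end Boundary

theorem robust_talagrand_level_ge_d :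
    ∃ c : ℝ, 0 < c ∧ ∀ (n : ℕ) (d : ℕ), 1 ≤ d →
      ∀ (f : (Fin n → Bool) → Bool) (col : (Fin n → Bool) → Fin n → Bool),
        colSymm col →
        talagrandCol f col ≥ c * Real.sqrt d * wGe n (toReal f) d := by
  refine ⟨1 / 16, by norm_num, fun n d hd f col hc => ?_⟩
  have hweight : √d * wGe n (toReal f) d ≤ 4 * (4 * talagrandCol f col) :=
    sqrt_mul_wGe_le_of_wApprox _ (fun _ => sqrt_mul_wApprox_le_talagrandCol f hc) hd
  linarith

end
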